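/- Let ν* = min{bᵀy : Aᵀy ≥ w, y ≥ 0} be finite, c ∈ ℤ_{>0}^n, B > 0, and for λ ≥ 0 define L(λ) = min{bᵀy − λ(B − cᵀr) : Aᵀy + r ≥ w, y ≥ 0, r ≥ 0} restricted to solutions with r integral. Then for every λ ≥ ν*, the choice r = 0 is optimal, and any maximizer λ* of L satisfies λ* ≤ ν*. -/

import Mathlib

open Finset Matrix

/-- For `λ ≥ ν*`, the choice `r = 0` is optimal in the Lagrangian LP (with
integral `r`), so `L(λ) = ν* - λB`; consequently any maximizer `λ*` of `L`
satisfies `λ* ≤ ν*`. -/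
theorem lagrangian_multiplier_bound {m n : ℕ} (A : Matrix (Fin m) (Fin n) ℝ)
    (b : Fin m → ℝ) (hb : ∀ j, 0 ≤ b j)
    (w : Fin n → ℝ) (hw : ∀ i, w i = 0 ∨ w i = 1)
    (c : Fin n → ℝ) (hc : ∀ i, ∃ k : ℤ, c i = k ∧ 0 < k)
    (B : ℝ) (hB : ∃ k : ℤ, B = k ∧ 0 < k)
    (ystar : Fin m → ℝ)
    (hystarFeas : (∀ i, w i ≤ Aᵀ.mulVec ystar i) ∧ ∀ j, 0 ≤ ystar j)
    (hystarOpt : ∀ y : Fin m → ℝ, (∀ i, w i ≤ Aᵀ.mulVec y i) → (∀ j, 0 ≤ y j) →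
      ∑ j, b j * ystar j ≤ ∑ j, b j * y j)
    (L : ℝ → ℝ)
    (hL : ∀ lam : ℝ, 0 ≤ lam →
      IsLeast {v : ℝ | ∃ y : Fin m → ℝ, ∃ r : Fin n → ℝ,
        (∀ i, w i ≤ Aᵀ.mulVec y i + r i) ∧ (∀ j, 0 ≤ y j) ∧ (∀ i, 0 ≤ r i) ∧
        (∀ i, ∃ k : ℤ, r i = k) ∧
        v = ∑ j, b j * y j - lam * (B - ∑ i, c i * r i)} (L lam)) :
    (∀ lam : ℝ, ∑ j, b j * ystar j ≤ lam →
        L lam = ∑ j, b j * ystar j - lam * B) ∧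
      ∀ lamstar : ℝ, 0 ≤ lamstar → (∀ lam : ℝ, 0 ≤ lam → L lam ≤ L lamstar) →
        lamstar ≤ ∑ j, b j * ystar j := by
  have hc1 : ∀ i, 1 ≤ c i := by
    intro i
    obtain ⟨k, hk, hk0⟩ := hc i
    rw [hk]
    exact_mod_cast hk0
  have hB0 : 0 < B := by
    obtain ⟨k, hk, hk0⟩ := hB
    rw [hk]
    exact_mod_cast hk0
  have hnu : 0 ≤ ∑ j, b j * ystar j :=
    Finset.sum_nonneg fun j _ => mul_nonneg (hb j) (hystarFeas.2 j)
  have key : ∀ lam : ℝ, ∑ j, b j * ystar j ≤ lam →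
      L lam = ∑ j, b j * ystar j - lam * B := by
    intro lam hlam
    have hlam0 : 0 ≤ lam := hnu.trans hlam
    obtain ⟨⟨y, r, hf, hy, hr, hint, hv⟩, hlb⟩ := hL lam hlam0
    apply le_antisymm
    · apply hlb
      refine ⟨ystar, 0, ?_, hystarFeas.2, ?_, ?_, ?_⟩
      · intro i
        simpa using hystarFeas.1 i
      · intro i
        simp
      · intro i
        exact ⟨0, by simp⟩
      · simp
    · rw [hv]
      by_cases h0 : ∀ i, r i = 0
      · have h1 := hystarOpt y (fun i => by simpa [h0 i] using hf i) hy
        have h2 : ∑ i, c i * r i = 0 := Finset.sum_eq_zero fun i _ => by simp [h0 i]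
        rw [h2]
        linarith
      · push Not at h0
        obtain ⟨i, hi⟩ := h0
        have hri : 1 ≤ r i := by
          obtain ⟨k, hk⟩ := hint i
          have hpos : 0 < r i := lt_of_le_of_ne (hr i) (Ne.symm hi)
          rw [hk] at hpos ⊢
          have hk0 : 0 < k := by exact_mod_cast hpos
          exact_mod_cast hk0
        have h3 : c i * r i ≤ ∑ i, c i * r i :=
          Finset.single_le_sum (f := fun i => c i * r i)
            (fun j _ => mul_nonneg (zero_le_one.trans (hc1 j)) (hr j)) (Finset.mem_univ i)
        have h4 : 1 ≤ ∑ i, c i * r i := by nlinarith [hc1 i]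
        have h5 : 0 ≤ ∑ j, b j * y j := Finset.sum_nonneg fun j _ => mul_nonneg (hb j) (hy j)
        have h6 := mul_le_mul_of_nonneg_left h4 hlam0
        linarith
  refine ⟨key, ?_⟩
  intro lamstar _ hmax
  by_contra hlt
  push Not at hlt
  have h1 := hmax _ hnu
  rw [key _ le_rfl, key _ hlt.le] at h1
  have h2 := mul_lt_mul_of_pos_right hlt hB0
  linarith
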